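/- Fix γ > 0, unit vectors θ, ξ ∈ S^{n-1} with ⟨θ,ξ⟩ > 0, real numbers r_0 < r_1, a constant m > 0, and an (n−1)-dimensional convex body D ⊂ ξ^⊥ whose centroid (taken within ξ^⊥) is at the origin. Let K_T = conv( r_0 θ , r_1 θ + D ), T(x) = m · 𝟙_{K_T}(x) · ( −⟨x,ξ⟩ + r_1⟨θ,ξ⟩ )^{1/γ}, and t_* = ( nγ r_1 + (γ+1) r_0 ) / ( (n+1)γ + 1 ) (so that g(T) = t_* θ). Then ∫_{t_*}^∞ T(sθ) ds = ( (γ+1)/( nγ + γ + 1 ) )^{(γ+1)/γ} · ∫_{-∞}^∞ T(sθ) ds. In particular, when r_0 = −( nγ/(γ+1) ) r_1 with r_1 > 0, the function T has centroid at the origin and attains equality in the inequality ∫_0^∞ T(sθ) ds ≥ ((γ+1)/(γn+γ+1))^{(γ+1)/γ} ∫_{-∞}^∞ T(sθ) ds. -/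

import Mathlib

open MeasureTheory Set
open scoped RealInnerProductSpace

lemma mfe_KT {E : Type*} [NormedAddCommGroup E] [InnerProductSpace ℝ E] (θ : E) (r₀ r₁ : ℝ)
    (D : Set E) (hD : Convex ℝ D) (hne : D.Nonempty) :
    convexHull ℝ (insert (r₀ • θ) ((fun d => r₁ • θ + d) '' D)) =
      (fun q : ℝ × E => ((1 - q.1) * r₀ + q.1 * r₁) • θ + q.1 • q.2) '' (Icc (0:ℝ) 1 ×ˢ D) := by
  have hc : Convex ℝ ((fun d => r₁ • θ + d) '' D) := by
    have := hD.translate (r₁ • θ)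
    simpa using this
  rw [convexHull_insert (hne.image _), hc.convexHull_eq]
  ext x
  simp only [mem_convexJoin, mem_singleton_iff, exists_eq_left, mem_image, exists_exists_and_eq_and, Prod.exists, mem_prod,
    segment_eq_image]
  constructor
  · rintro ⟨d, hd, l, hl, rfl⟩
    exact ⟨l, d, ⟨hl, hd⟩, by module⟩
  · rintro ⟨l, d, ⟨hl, hd⟩, rfl⟩
    exact ⟨d, hd, l, hl, by module⟩

lemma mfe_KT_compact {E : Type*} [NormedAddCommGroup E] [InnerProductSpace ℝ E] (θ : E) (r₀ r₁ : ℝ)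
    (D : Set E) (hD : IsCompact D) :
    IsCompact ((fun q : ℝ × E => ((1 - q.1) * r₀ + q.1 * r₁) • θ + q.1 • q.2) '' (Icc (0:ℝ) 1 ×ˢ D)) :=
  (isCompact_Icc.prod hD).image (by fun_prop)

lemma mfe_mem {E : Type*} [NormedAddCommGroup E] [InnerProductSpace ℝ E] (θ ξ : E) (h : 0 < ⟪θ, ξ⟫)
    (r₀ r₁ : ℝ) (hr : r₀ < r₁)
    (D : Set E) (hD : D ⊆ {x | ⟪x, ξ⟫ = 0}) (y : E) (hy : ⟪y, ξ⟫ = 0) (u : ℝ) :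
    y + u • θ ∈ (fun q : ℝ × E => ((1 - q.1) * r₀ + q.1 * r₁) • θ + q.1 • q.2) '' (Icc (0:ℝ) 1 ×ˢ D)
      ↔ u ∈ Icc r₀ r₁ ∧ ∃ d ∈ D, y = ((u - r₀) / (r₁ - r₀)) • d := by
  have hr' : 0 < r₁ - r₀ := sub_pos.2 hr
  constructor
  · rintro ⟨⟨l, d⟩, ⟨hl, hd⟩, he⟩
    simp only at hl hd he
    have hd0 : ⟪d, ξ⟫ = 0 := hD hd
    have h1 := congrArg (fun z => ⟪z, ξ⟫) he
    simp only [inner_add_left, real_inner_smul_left, hd0, hy] at h1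
    have hu : u = (1 - l) * r₀ + l * r₁ := by
      have : (u - ((1 - l) * r₀ + l * r₁)) * ⟪θ, ξ⟫ = 0 := by linarith
      rcases mul_eq_zero.1 this with h2 | h2
      · linarith
      · exact absurd h2 h.ne'
    have hl' : l = (u - r₀) / (r₁ - r₀) := by rw [hu]; field_simp; ring
    refine ⟨⟨by nlinarith [hl.1], by nlinarith [hl.2]⟩, d, hd, ?_⟩
    rw [← hl']
    rw [← hu, add_comm y] at he
    exact (add_left_cancel he).symm
  · rintro ⟨⟨h0, h1⟩, d, hd, rfl⟩
    refine ⟨((u - r₀) / (r₁ - r₀), d), ⟨⟨by apply div_nonneg <;> linarith, by rw [div_le_one hr']; linarith⟩, hd⟩, ?_⟩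
    simp only
    have : (1 - (u - r₀) / (r₁ - r₀)) * r₀ + (u - r₀) / (r₁ - r₀) * r₁ = u := by field_simp; ring
    rw [this, add_comm]

/-- the one dimensional integral -/
lemma mfe_int (p : ℝ) (hp : 0 < p) (c : ℝ) (hc : 0 ≤ c) (t r : ℝ) (h : t ≤ r) :
    ∫ s in Icc t r, ((r - s) * c) ^ p = (r - t) ^ (p + 1) / (p + 1) * c ^ p := by
  rw [integral_Icc_eq_integral_Ioc, ← intervalIntegral.integral_of_le h]
  have : ∫ s in t..r, ((r - s) * c) ^ p = ∫ s in t..r, (r - s) ^ p * c ^ p := by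
    apply intervalIntegral.integral_congr
    intro s hs
    rw [uIcc_of_le h] at hs
    exact Real.mul_rpow (by linarith [hs.2]) hc
  rw [this, intervalIntegral.integral_mul_const,
    intervalIntegral.integral_comp_sub_left (fun x => x ^ p), integral_rpow (by left; linarith)]
  simp [Real.zero_rpow (by linarith : p + 1 ≠ 0)]

/-- the radial moment integral vanishes -/
lemma mfe_moment (n : ℕ) (hn : 1 ≤ n) (p : ℝ) (hp : 0 < p) (r₀ r₁ : ℝ) (hr : r₀ < r₁)
    (h : n * r₁ + (p + 1) * r₀ = 0) :
    ∫ u in r₀..r₁, (u - r₀) ^ (n - 1) * (r₁ - u) ^ p * u = 0 := by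
  have key : ∫ u in r₀..r₁, (-(n + p + 1)) * ((u - r₀) ^ (n - 1) * (r₁ - u) ^ p * u) = 
      (fun u : ℝ => (u - r₀) ^ n * (r₁ - u) ^ (p + 1)) r₁ - (fun u : ℝ => (u - r₀) ^ n * (r₁ - u) ^ (p + 1)) r₀ := by
    apply intervalIntegral.integral_eq_sub_of_hasDerivAt_of_le (f := fun u : ℝ => (u - r₀) ^ n * (r₁ - u) ^ (p + 1)) hr.le
    · apply Continuous.continuousOn
      exact ((continuous_id.sub continuous_const).pow n).mul
        ((continuous_const.sub continuous_id).rpow_const (fun _ => Or.inr (by linarith)))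
    · intro u hu
      have h1 : HasDerivAt (fun u : ℝ => (u - r₀) ^ n) (n * (u - r₀) ^ (n - 1) * 1) u :=
        ((hasDerivAt_id u).sub_const r₀).pow n
      have h2 : HasDerivAt (fun u : ℝ => (r₁ - u) ^ (p + 1)) (-1 * (p + 1) * (r₁ - u) ^ (p + 1 - 1)) u :=
        ((hasDerivAt_id u).const_sub r₁).rpow_const (Or.inr (by linarith))
      convert! h1.mul h2 using 1
      obtain ⟨k, rfl⟩ : ∃ k, n = k + 1 := ⟨n - 1, by omega⟩
      have hpos : 0 < r₁ - u := by linarith [hu.2]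
      rw [Real.rpow_add hpos, Real.rpow_one]
      simp only [add_sub_cancel_right, Nat.add_sub_cancel, pow_succ]
      push_cast at h ⊢
      linear_combination (-(u - r₀) ^ k * (r₁ - u) ^ p) * h
    · apply Continuous.intervalIntegrable
      exact continuous_const.mul ((((continuous_id.sub continuous_const).pow _).mul
        ((continuous_const.sub continuous_id).rpow_const (fun _ => Or.inr hp.le))).mul continuous_id)
  rw [intervalIntegral.integral_const_mul] at key
  have hn0 : n ≠ 0 := by omega
  simp only [sub_self, zero_pow hn0, Real.zero_rpow (by linarith : p + 1 ≠ 0), mul_zero, zero_mul] at key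
  rcases mul_eq_zero.1 key with h1 | h1
  · have : (0:ℝ) ≤ n := Nat.cast_nonneg n
    linarith
  · exact h1

lemma mfe_inner {n : ℕ} (ξ : EuclideanSpace ℝ (Fin n)) (x : EuclideanSpace ℝ (Fin n)) :
    x ∈ (ℝ ∙ ξ)ᗮ ↔ ⟪x, ξ⟫ = 0 := by
  rw [Submodule.mem_orthogonal_singleton_iff_inner_left]

lemma mfe_finrank (n : ℕ) (hn : 1 ≤ n) (ξ : EuclideanSpace ℝ (Fin n)) (hξ : ‖ξ‖ = 1) :
    Module.finrank ℝ (ℝ ∙ ξ)ᗮ = n - 1 := by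
  have : Fact (Module.finrank ℝ (EuclideanSpace ℝ (Fin n)) = (n - 1) + 1) :=
    ⟨by rw [finrank_euclideanSpace_fin]; omega⟩
  exact Submodule.finrank_orthogonal_span_singleton (by rintro rfl; simp at hξ)

/-- Transfer of the Hausdorff data to the hyperplane. -/
lemma mfe_transfer (n : ℕ) (hn : 1 ≤ n) (ξ : EuclideanSpace ℝ (Fin n)) (hξ : ‖ξ‖ = 1)
    (D : Set (EuclideanSpace ℝ (Fin n))) (hD_comp : IsCompact D)
    (hD_sub : D ⊆ {x | ⟪x, ξ⟫ = 0}) :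
    ∃ ν : Measure (ℝ ∙ ξ)ᗮ, ν.IsAddHaarMeasure ∧
      ν ((fun y : (ℝ ∙ ξ)ᗮ => (y : EuclideanSpace ℝ (Fin n))) ⁻¹' D) = μH[(n : ℝ) - 1] D ∧
      ∫ y in (fun y : (ℝ ∙ ξ)ᗮ => (y : EuclideanSpace ℝ (Fin n))) ⁻¹' D,
        (y : EuclideanSpace ℝ (Fin n)) ∂ν = ∫ x in D, x ∂μH[(n : ℝ) - 1] := by
  have hd : (n : ℝ) - 1 = (Module.finrank ℝ (ℝ ∙ ξ)ᗮ : ℕ) := by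
    rw [mfe_finrank n hn ξ hξ]; push_cast [hn]; ring
  have hiso : Isometry (fun y : (ℝ ∙ ξ)ᗮ => (y : EuclideanSpace ℝ (Fin n))) := isometry_subtype_coe
  have hrange : D ⊆ range (fun y : (ℝ ∙ ξ)ᗮ => (y : EuclideanSpace ℝ (Fin n))) := fun x hx =>
    ⟨⟨x, (mfe_inner ξ x).2 (hD_sub hx)⟩, rfl⟩
  rw [hd]
  refine ⟨μH[(Module.finrank ℝ (ℝ ∙ ξ)ᗮ : ℕ)], inferInstance, ?_, ?_⟩
  · rw [hiso.hausdorffMeasure_preimage (Or.inl (Nat.cast_nonneg _)), inter_eq_left.2 hrange]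
  · have hme : MeasurableEmbedding (fun y : (ℝ ∙ ξ)ᗮ => (y : EuclideanSpace ℝ (Fin n))) :=
      (Submodule.closed_of_finiteDimensional _).isClosedEmbedding_subtypeVal.measurableEmbedding
    rw [← hme.setIntegral_map (fun x => x), hiso.map_hausdorffMeasure (Or.inl (Nat.cast_nonneg _)),
      Measure.restrict_restrict hD_comp.isClosed.measurableSet, inter_eq_left.2 hrange]

lemma mfe_zero_mem (n : ℕ) (hn : 1 ≤ n) (ξ : EuclideanSpace ℝ (Fin n)) (hξ : ‖ξ‖ = 1)
    (D : Set (EuclideanSpace ℝ (Fin n))) (hD_conv : Convex ℝ D) (hD_comp : IsCompact D)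
    (hD_sub : D ⊆ {x | ⟪x, ξ⟫ = 0})
    (hD_pos : 0 < μH[(n : ℝ) - 1] D)
    (hD_cent : (μH[(n : ℝ) - 1] D).toReal⁻¹ • (∫ x in D, x ∂μH[(n : ℝ) - 1]) =
      (0 : EuclideanSpace ℝ (Fin n))) : 
    (0 : EuclideanSpace ℝ (Fin n)) ∈ D ∧ (∫ x in D, x ∂μH[(n : ℝ) - 1]) = 0 := by
  obtain ⟨ν, hν, h1, h2⟩ := mfe_transfer n hn ξ hξ D hD_comp hD_sub
  have hcl : Topology.IsClosedEmbedding (fun y : (ℝ ∙ ξ)ᗮ => (y : EuclideanSpace ℝ (Fin n))) :=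
    (Submodule.closed_of_finiteDimensional _).isClosedEmbedding_subtypeVal
  have hcomp := hcl.isCompact_preimage hD_comp
  have hfin : μH[(n : ℝ) - 1] D ≠ ⊤ := by
    rw [← h1]; exact hcomp.measure_lt_top.ne
  have hint : IntegrableOn (fun x : EuclideanSpace ℝ (Fin n) => x) D μH[(n : ℝ) - 1] := by
    obtain ⟨C, hC⟩ := hD_comp.exists_bound_of_continuousOn (f := fun x => x) continuousOn_id
    refine Measure.integrableOn_of_bounded (M := C) hfin ?_ ?_
    · exact continuous_id.aestronglyMeasurable
    · exact (ae_restrict_mem hD_comp.isClosed.measurableSet).mono hC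
  have := hD_conv.set_average_mem (μ := μH[(n : ℝ) - 1]) (f := fun x => x) hD_comp.isClosed hD_pos.ne' hfin
    (ae_restrict_mem hD_comp.isClosed.measurableSet) hint
  rw [setAverage_eq, measureReal_def, hD_cent] at this
  refine ⟨this, ?_⟩
  rcases smul_eq_zero.1 hD_cent with h | h
  · exact absurd h (inv_ne_zero (ENNReal.toReal_ne_zero.2 ⟨hD_pos.ne', hfin⟩))
  · exact h

/-- Linear coordinates `(y, u) ↦ y + u θ`. -/
lemma mfe_coord (n : ℕ) (θ ξ : EuclideanSpace ℝ (Fin n)) (h : 0 < ⟪θ, ξ⟫) :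
    ∃ L : ((ℝ ∙ ξ)ᗮ × ℝ) ≃L[ℝ] EuclideanSpace ℝ (Fin n), ∀ q, L q = (q.1 : EuclideanSpace ℝ (Fin n)) + q.2 • θ := by
  let f : ((ℝ ∙ ξ)ᗮ × ℝ) →ₗ[ℝ] EuclideanSpace ℝ (Fin n) :=
    (Submodule.subtype _).coprod (LinearMap.toSpanSingleton ℝ _ θ)
  have hf : ∀ q, f q = (q.1 : EuclideanSpace ℝ (Fin n)) + q.2 • θ := fun q => by simp [f]
  have hbij : Function.Bijective f := by
    constructor
    · rw [injective_iff_map_eq_zero]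
      rintro ⟨y, u⟩ hq
      rw [hf] at hq
      have h1 := congrArg (fun z => ⟪z, ξ⟫) hq
      have hy := (mfe_inner ξ y).1 y.2
      simp only [inner_add_left, real_inner_smul_left, hy, inner_zero_left, zero_add] at h1
      rcases mul_eq_zero.1 h1 with h2 | h2
      · subst h2
        simp at hq
        simp [hq]
      · exact absurd h2 h.ne'
    · intro x
      have hx : ⟪x - (⟪x, ξ⟫ / ⟪θ, ξ⟫) • θ, ξ⟫ = 0 := by
        rw [inner_sub_left, real_inner_smul_left]; field_simp; ring
      refine ⟨(⟨_, (mfe_inner ξ _).2 hx⟩, ⟪x, ξ⟫ / ⟪θ, ξ⟫), ?_⟩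
      rw [hf]; simp
  exact ⟨(LinearEquiv.ofBijective f hbij).toContinuousLinearEquiv, hf⟩

open scoped Pointwise in
lemma mfe_slice (n : ℕ) (hn : 1 ≤ n)
    (θ ξ : EuclideanSpace ℝ (Fin n)) (hξ : ‖ξ‖ = 1)
    (D : Set (EuclideanSpace ℝ (Fin n))) (hD_comp : IsCompact D)
    (ν : Measure (ℝ ∙ ξ)ᗮ) [ν.IsAddHaarMeasure]
    (h2 : ∫ y in (fun y : (ℝ ∙ ξ)ᗮ => (y : EuclideanSpace ℝ (Fin n))) ⁻¹' D,
        (y : EuclideanSpace ℝ (Fin n)) ∂ν = 0) (l : ℝ) (hl : 0 < l) (u : ℝ) :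
    ∫ y in l • ((fun y : (ℝ ∙ ξ)ᗮ => (y : EuclideanSpace ℝ (Fin n))) ⁻¹' D),
      ((y : EuclideanSpace ℝ (Fin n)) + u • θ) ∂ν =
      (l ^ (n - 1) * ν.real ((fun y : (ℝ ∙ ξ)ᗮ => (y : EuclideanSpace ℝ (Fin n))) ⁻¹' D) * u) • θ := by
  have hcl : Topology.IsClosedEmbedding (fun y : (ℝ ∙ ξ)ᗮ => (y : EuclideanSpace ℝ (Fin n))) :=
    (Submodule.closed_of_finiteDimensional _).isClosedEmbedding_subtypeVal
  have hcomp := hcl.isCompact_preimage hD_comp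
  have h := Measure.setIntegral_comp_smul_of_pos ν (fun y : (ℝ ∙ ξ)ᗮ =>
    (y : EuclideanSpace ℝ (Fin n)) + u • θ)
    ((fun y : (ℝ ∙ ξ)ᗮ => (y : EuclideanSpace ℝ (Fin n))) ⁻¹' D) hl
  rw [mfe_finrank n hn ξ hξ] at h
  have hp : l ^ (n - 1) ≠ 0 := (pow_pos hl _).ne'
  rw [eq_inv_smul_iff₀ hp] at h
  rw [← h]
  simp only [Submodule.coe_smul]
  rw [integral_add, integral_smul, h2, setIntegral_const]
  · module
  · exact ((continuous_subtype_val.const_smul l).continuousOn).integrableOn_compact hcomp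
  · exact continuousOn_const.integrableOn_compact hcomp

open scoped Pointwise in
lemma mfe_centroid (n : ℕ) (hn : 1 ≤ n) (p : ℝ) (hp : 0 < p)
    (θ ξ : EuclideanSpace ℝ (Fin n)) (hξ : ‖ξ‖ = 1)
    (hθξ : 0 < ⟪θ, ξ⟫)
    (r₀ r₁ : ℝ) (hr : r₀ < r₁) (m : ℝ)
    (D : Set (EuclideanSpace ℝ (Fin n)))
    (hD_comp : IsCompact D)
    (hD_sub : D ⊆ {x | ⟪x, ξ⟫ = 0})
    (hD_cent : (∫ x in D, x ∂μH[(n : ℝ) - 1]) = (0 : EuclideanSpace ℝ (Fin n)))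
    (KT : Set (EuclideanSpace ℝ (Fin n)))
    (hKT : KT = (fun q : ℝ × EuclideanSpace ℝ (Fin n) =>
      ((1 - q.1) * r₀ + q.1 * r₁) • θ + q.1 • q.2) '' (Icc (0:ℝ) 1 ×ˢ D))
    (T : EuclideanSpace ℝ (Fin n) → ℝ)
    (hT : ∀ x, T x = m * KT.indicator (fun y => (-⟪y, ξ⟫ + r₁ * ⟪θ, ξ⟫) ^ p) x)
    (h : n * r₁ + (p + 1) * r₀ = 0) :
    (∫ x, T x • x) = (0 : EuclideanSpace ℝ (Fin n)) := by
  obtain ⟨ν, hν, h1, h2⟩ := mfe_transfer n hn ξ hξ D hD_comp hD_sub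
  rw [hD_cent] at h2
  obtain ⟨L, hL⟩ := mfe_coord n θ ξ hθξ
  have hKc : IsCompact KT := hKT ▸ mfe_KT_compact θ r₀ r₁ D hD_comp
  have hKm : MeasurableSet KT := hKc.isClosed.measurableSet
  have hfun : (fun x => T x • x) =
      KT.indicator (fun x => (m * (-⟪x, ξ⟫ + r₁ * ⟪θ, ξ⟫) ^ p) • x) := by
    ext1 x
    by_cases hx : x ∈ KT <;> simp [hT, hx]
  have hcont : Continuous (fun x : EuclideanSpace ℝ (Fin n) =>
      (m * (-⟪x, ξ⟫ + r₁ * ⟪θ, ξ⟫) ^ p) • x) := by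
    refine Continuous.smul (continuous_const.mul (Continuous.rpow_const (by fun_prop)
      (fun _ => Or.inr hp.le))) continuous_id
  have hvol : ∃ c : NNReal, (volume : Measure (EuclideanSpace ℝ (Fin n))) =
      c • (ν.prod (volume : Measure ℝ)).map L :=
    ⟨_, Measure.isAddLeftInvariant_eq_smul _ _⟩
  obtain ⟨c, hc⟩ := hvol
  have hLme : MeasurableEmbedding L := L.toHomeomorph.measurableEmbedding
  have hint : Integrable (fun x => T x • x) ((ν.prod (volume : Measure ℝ)).map L) := by
    rw [hfun, integrable_indicator_iff hKm]
    exact hcont.continuousOn.integrableOn_compact hKc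
  rw [hc, integral_smul_nnreal_measure, hLme.integral_map]
  rw [hLme.integrable_map_iff] at hint
  replace hint : Integrable (fun q => T (L q) • L q) (ν.prod (volume : Measure ℝ)) := hint
  rw [integral_prod_symm _ hint]
  set Dp := (fun y : (ℝ ∙ ξ)ᗮ => (y : EuclideanSpace ℝ (Fin n))) ⁻¹' D with hDp
  have hval : ∀ (y : (ℝ ∙ ξ)ᗮ) (u : ℝ), ⟪(y : EuclideanSpace ℝ (Fin n)) + u • θ, ξ⟫ = u * ⟪θ, ξ⟫ := by
    intro y u
    rw [inner_add_left, real_inner_smul_left, (mfe_inner ξ y).1 y.2, zero_add]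
  have hmem : ∀ (y : (ℝ ∙ ξ)ᗮ) (u : ℝ), (y : EuclideanSpace ℝ (Fin n)) + u • θ ∈ KT ↔
      u ∈ Icc r₀ r₁ ∧ ∃ d ∈ D, (y : EuclideanSpace ℝ (Fin n)) = ((u - r₀) / (r₁ - r₀)) • d := by
    intro y u
    rw [hKT]
    exact mfe_mem θ ξ hθξ r₀ r₁ hr D hD_sub y ((mfe_inner ξ y).1 y.2) u
  have hr' : 0 < r₁ - r₀ := sub_pos.2 hr
  have hDc : IsCompact Dp := by
    have hcl : Topology.IsClosedEmbedding (fun y : (ℝ ∙ ξ)ᗮ => (y : EuclideanSpace ℝ (Fin n))) :=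
      (Submodule.closed_of_finiteDimensional _).isClosedEmbedding_subtypeVal
    exact hcl.isCompact_preimage hD_comp
  have hsl : ∀ u : ℝ, u ≠ r₀ → ∫ y, T (L (y, u)) • L (y, u) ∂ν =
      (Ioc r₀ r₁).indicator (fun u => ((m * ⟪θ, ξ⟫ ^ p * ν.real Dp * ((r₁ - r₀) ^ (n - 1))⁻¹) *
        ((u - r₀) ^ (n - 1) * (r₁ - u) ^ p * u)) • θ) u := by
    intro u hu0
    by_cases hu : u ∈ Ioc r₀ r₁
    · rw [indicator_of_mem hu]
      have hl : 0 < (u - r₀) / (r₁ - r₀) := div_pos (by linarith [hu.1]) hr'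
      have hs := mfe_slice n hn θ ξ hξ D hD_comp ν h2 _ hl u
      have hfe : (fun y : (ℝ ∙ ξ)ᗮ => T (L (y, u)) • L (y, u)) =
          (((u - r₀) / (r₁ - r₀)) • Dp : Set (ℝ ∙ ξ)ᗮ).indicator
          (fun y => (m * ((r₁ - u) * ⟪θ, ξ⟫) ^ p) • ((y : EuclideanSpace ℝ (Fin n)) + u • θ)) := by
        ext1 y
        have hiff : (y : EuclideanSpace ℝ (Fin n)) + u • θ ∈ KT ↔
            y ∈ (((u - r₀) / (r₁ - r₀)) • Dp : Set (ℝ ∙ ξ)ᗮ) := by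
          rw [hmem, mem_smul_set]
          constructor
          · rintro ⟨-, d, hd, hyd⟩
            exact ⟨⟨d, (mfe_inner ξ d).2 (hD_sub hd)⟩, hd, Subtype.ext hyd.symm⟩
          · rintro ⟨d, hd, rfl⟩
            exact ⟨⟨hu.1.le, hu.2⟩, d, hd, rfl⟩
        simp only [hL]
        rw [hT]
        by_cases hy : (y : EuclideanSpace ℝ (Fin n)) + u • θ ∈ KT
        · rw [indicator_of_mem hy, indicator_of_mem (hiff.1 hy), hval]
          congr 3; ring
        · rw [indicator_of_notMem hy, indicator_of_notMem (fun h => hy (hiff.2 h))]; simp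
      rw [hfe, integral_indicator (hDc.smul _).isClosed.measurableSet, integral_smul, hs, smul_smul]
      congr 1
      rw [Real.mul_rpow (by linarith [hu.2]) hθξ.le, div_pow]
      ring
    · rw [indicator_of_notMem hu]
      have : ∀ y : (ℝ ∙ ξ)ᗮ, T (L (y, u)) • L (y, u) = 0 := by
        intro y
        rw [hL, hT, indicator_of_notMem, mul_zero, zero_smul]
        intro hy
        have := ((hmem y u).1 hy).1
        exact hu ⟨lt_of_le_of_ne this.1 (Ne.symm hu0), this.2⟩
      simp [this]
  have hae : (fun u : ℝ => ∫ y, T (L (y, u)) • L (y, u) ∂ν) =ᵐ[volume]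
      (Ioc r₀ r₁).indicator (fun u => ((m * ⟪θ, ξ⟫ ^ p * ν.real Dp * ((r₁ - r₀) ^ (n - 1))⁻¹) *
        ((u - r₀) ^ (n - 1) * (r₁ - u) ^ p * u)) • θ) := by
    filter_upwards [compl_mem_ae_iff.2 (measure_singleton (μ := (volume : Measure ℝ)) r₀)] with u hu
    exact hsl u hu
  rw [integral_congr_ae hae, integral_indicator measurableSet_Ioc, integral_smul_const,
    ← intervalIntegral.integral_of_le hr.le, intervalIntegral.integral_const_mul,
    mfe_moment n hn p hp r₀ r₁ hr h]
  simp

lemma mfe_line (p : ℝ) (hp : 0 < p) {E : Type*} [NormedAddCommGroup E] [InnerProductSpace ℝ E]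
    (θ ξ : E) (hθξ : 0 < ⟪θ, ξ⟫)
    (r₀ r₁ : ℝ) (hr : r₀ < r₁) (m : ℝ) (D : Set E)
    (hD_sub : D ⊆ {x | ⟪x, ξ⟫ = 0}) (h0 : (0 : E) ∈ D)
    (KT : Set E)
    (hKT : KT = (fun q : ℝ × E =>
      ((1 - q.1) * r₀ + q.1 * r₁) • θ + q.1 • q.2) '' (Icc (0:ℝ) 1 ×ˢ D))
    (T : E → ℝ)
    (hT : ∀ x, T x = m * KT.indicator (fun y => (-⟪y, ξ⟫ + r₁ * ⟪θ, ξ⟫) ^ p) x) :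
    (∫ s : ℝ, T (s • θ)) = m * ((r₁ - r₀) ^ (p + 1) / (p + 1) * ⟪θ, ξ⟫ ^ p) ∧
    ∀ t, r₀ ≤ t → t ≤ r₁ →
      (∫ s in Ioi t, T (s • θ)) = m * ((r₁ - t) ^ (p + 1) / (p + 1) * ⟪θ, ξ⟫ ^ p) := by
  have hmem : ∀ s : ℝ, s • θ ∈ KT ↔ s ∈ Icc r₀ r₁ := by
    intro s
    have := mfe_mem θ ξ hθξ r₀ r₁ hr D hD_sub 0 (inner_zero_left _) s
    rw [zero_add, ← hKT] at this
    rw [this]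
    exact ⟨fun h => h.1, fun h => ⟨h, 0, h0, by simp⟩⟩
  have hfun : (fun s : ℝ => T (s • θ)) =
      (Icc r₀ r₁).indicator (fun s => m * ((r₁ - s) * ⟪θ, ξ⟫) ^ p) := by
    ext1 s
    rw [hT]
    by_cases hs : s ∈ Icc r₀ r₁
    · rw [indicator_of_mem hs, indicator_of_mem ((hmem s).2 hs), real_inner_smul_left]
      congr 2; ring
    · rw [indicator_of_notMem hs, indicator_of_notMem (fun h => hs ((hmem s).1 h)), mul_zero]
  rw [hfun]
  constructor
  · rw [integral_indicator measurableSet_Icc, integral_const_mul, mfe_int p hp _ hθξ.le _ _ hr.le]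
  · intro t h1 h2
    rw [← integral_Ici_eq_integral_Ioi, setIntegral_indicator measurableSet_Icc]
    have : Ici t ∩ Icc r₀ r₁ = Icc t r₁ := by
      ext s; simp only [mem_inter_iff, mem_Ici, mem_Icc]
      constructor
      · rintro ⟨a, b, c⟩; exact ⟨a, c⟩
      · rintro ⟨a, b⟩; exact ⟨a, h1.trans a, b⟩
    rw [this, integral_const_mul, mfe_int p hp _ hθξ.le _ _ h2]

/-- **The model γ-affine function attains equality.** For
`T(x) = m 𝟙_{K_T}(x) (-⟨x,ξ⟩ + r₁⟨θ,ξ⟩)^{1/γ}` with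
`K_T = conv( r₀θ , r₁θ + D )` and `t⋆ = (nγr₁ + (γ+1)r₀)/((n+1)γ+1)` (so that
`g(T) = t⋆ θ`), we have
`∫_{t⋆}^∞ T(sθ) ds = ((γ+1)/(nγ+γ+1))^{(γ+1)/γ} ∫_{-∞}^∞ T(sθ) ds`. In
particular, when `r₀ = -(nγ/(γ+1)) r₁` with `r₁ > 0`, the function `T` has
centroid at the origin and attains equality in
`∫_0^∞ T(sθ) ds ≥ ((γ+1)/(γn+γ+1))^{(γ+1)/γ} ∫_{-∞}^∞ T(sθ) ds`. -/
theorem model_function_equality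
    (n : ℕ) (hn : 1 ≤ n)
    (γ : ℝ) (hγ : 0 < γ)
    (θ ξ : EuclideanSpace ℝ (Fin n)) (hθ : ‖θ‖ = 1) (hξ : ‖ξ‖ = 1)
    (hθξ : 0 < ⟪θ, ξ⟫)
    (r₀ r₁ : ℝ) (hr : r₀ < r₁)
    (m : ℝ) (hm : 0 < m)
    (D : Set (EuclideanSpace ℝ (Fin n)))
    (hD_conv : Convex ℝ D) (hD_comp : IsCompact D)
    (hD_sub : D ⊆ {x | ⟪x, ξ⟫ = 0})
    (hD_pos : 0 < μH[(n : ℝ) - 1] D)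
    (hD_cent : (μH[(n : ℝ) - 1] D).toReal⁻¹ • (∫ x in D, x ∂μH[(n : ℝ) - 1]) =
      (0 : EuclideanSpace ℝ (Fin n)))
    (KT : Set (EuclideanSpace ℝ (Fin n)))
    (hKT : KT = convexHull ℝ (insert (r₀ • θ) ((fun d => r₁ • θ + d) '' D)))
    (T : EuclideanSpace ℝ (Fin n) → ℝ)
    (hT : ∀ x, T x = m * KT.indicator (fun y => (-⟪y, ξ⟫ + r₁ * ⟪θ, ξ⟫) ^ (1 / γ)) x)
    (t : ℝ) (ht : t = (n * γ * r₁ + (γ + 1) * r₀) / ((n + 1) * γ + 1)) :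
    (∫ s in Ioi t, T (s • θ)) =
        ((γ + 1) / (n * γ + γ + 1)) ^ ((γ + 1) / γ) * (∫ s : ℝ, T (s • θ)) ∧
      (r₀ = -(n * γ / (γ + 1)) * r₁ → 0 < r₁ →
        (∫ x, T x • x) = (0 : EuclideanSpace ℝ (Fin n)) ∧
        (∫ s in Ioi (0 : ℝ), T (s • θ)) =
          ((γ + 1) / (γ * n + γ + 1)) ^ ((γ + 1) / γ) * (∫ s : ℝ, T (s • θ))) := by
  obtain ⟨h0, hc0⟩ := mfe_zero_mem n hn ξ hξ D hD_conv hD_comp hD_sub hD_pos hD_cent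
  rw [mfe_KT θ r₀ r₁ D hD_conv ⟨0, h0⟩] at hKT
  have hp : 0 < 1 / γ := by positivity
  obtain ⟨hline, htail⟩ := mfe_line (1 / γ) hp θ ξ hθξ r₀ r₁ hr m D hD_sub h0 KT hKT T hT
  have hn0 : (0 : ℝ) ≤ n := Nat.cast_nonneg n
  have hden : 0 < n * γ + γ + 1 := by positivity
  have hr' : 0 < r₁ - r₀ := sub_pos.2 hr
  have hrt : r₁ - t = (γ + 1) / (n * γ + γ + 1) * (r₁ - r₀) := by
    rw [ht, show ((n : ℝ) + 1) * γ + 1 = n * γ + γ + 1 by ring]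
    field_simp; ring
  have htr : t - r₀ = n * γ / (n * γ + γ + 1) * (r₁ - r₀) := by
    rw [ht, show ((n : ℝ) + 1) * γ + 1 = n * γ + γ + 1 by ring]
    field_simp; ring
  have ht1 : t ≤ r₁ := by
    have : 0 ≤ r₁ - t := by rw [hrt]; positivity
    linarith
  have ht0 : r₀ ≤ t := by
    have : 0 ≤ t - r₀ := by rw [htr]; positivity
    linarith
  have hexp : 1 / γ + 1 = (γ + 1) / γ := by field_simp; ring
  have main : (∫ s in Ioi t, T (s • θ)) =
        ((γ + 1) / (n * γ + γ + 1)) ^ ((γ + 1) / γ) * (∫ s : ℝ, T (s • θ)) := by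
    rw [hline, htail t ht0 ht1, hrt, Real.mul_rpow (by positivity) hr'.le, hexp]
    ring
  refine ⟨main, fun hr0 hr1 => ⟨?_, ?_⟩⟩
  · refine mfe_centroid n hn (1 / γ) hp θ ξ hξ hθξ r₀ r₁ hr m D hD_comp hD_sub hc0 KT hKT T hT ?_
    rw [hr0]; field_simp; ring
  · have : t = 0 := by
      rw [ht, hr0]; field_simp; ring
    rw [this] at main
    rw [mul_comm γ (n : ℝ)]
    exact main
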